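/- Let A, B ⊆ C. Then 𝒫(A,B) is σ-linked in the following strong sense: there exists a countable family of subsets F_n (n ∈ ℕ) of 𝒫(A,B) whose union is all of 𝒫(A,B), such that for any two conditions p, q belonging to the same F_n, the union of the graphs of p and q is the graph of a condition; in particular p and q are compatible. -/

import Mathlib

/-- `D_η = {σ : ℕ → Bool | ∀ n, σ (2n) = η n}` in Cantor space. -/
def DsetB (η : ℕ → Bool) : Set (ℕ → Bool) := {σ | ∀ n, σ (2 * n) = η n}

/-- `b_η` is the element of `D_η` with `b_η (2n) = η n` and `b_η (2n+1) = 1`. -/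
def bfun (η : ℕ → Bool) : ℕ → Bool := fun n => if n % 2 = 0 then η (n / 2) else true

/-- `S_η`: elements of `D_η` with `σ (2n+1) = 0` for all but finitely many `n`,
together with the extra point `b_η`. -/
def SsetB (η : ℕ → Bool) : Set (ℕ → Bool) :=
  {σ | σ ∈ DsetB η ∧ {n | σ (2 * n + 1) ≠ false}.Finite} ∪ {bfun η}

/-- `C = ⋃_η S_η`. -/
def CsetB : Set (ℕ → Bool) := ⋃ η : ℕ → Bool, SsetB η

/-- `E_i (σ, τ)` holds iff `σ` and `τ` agree below `i`. -/
def Erel (i : ℕ) (σ τ : ℕ → Bool) : Prop := ∀ k < i, σ k = τ k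

/-- A set `M ⊆ C` is amenable if whenever some element of `S_η` agrees with a finite
sequence `s` on all indices below `n`, some element of `M ∩ S_η` does as well. -/
def AmenableB (M : Set (ℕ → Bool)) : Prop :=
  ∀ (η : ℕ → Bool) (n : ℕ) (s : Fin n → Bool),
    (∃ ν ∈ SsetB η, ∀ k : Fin n, ν k = s k) →
    ∃ ν ∈ M ∩ SsetB η, ∀ k : Fin n, ν k = s k

/-- A condition in the forcing `𝒫(A,B)`: a finite partial injection from `A` to `B`
(given by its graph) preserving each `E_i` and each predicate `S_η`. -/
structure CondB (A B : Set (ℕ → Bool)) where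
  graph : Set ((ℕ → Bool) × (ℕ → Bool))
  finite : graph.Finite
  dom_sub : ∀ ⦃x y⦄, (x, y) ∈ graph → x ∈ A
  ran_sub : ∀ ⦃x y⦄, (x, y) ∈ graph → y ∈ B
  functional : ∀ ⦃x y y'⦄, (x, y) ∈ graph → (x, y') ∈ graph → y = y'
  injective : ∀ ⦃x x' y⦄, (x, y) ∈ graph → (x', y) ∈ graph → x = x'
  epres : ∀ ⦃x y x' y'⦄ (i : ℕ), (x, y) ∈ graph → (x', y') ∈ graph →
    (Erel i x x' ↔ Erel i y y')
  spres : ∀ ⦃x y⦄ (η : ℕ → Bool), (x, y) ∈ graph → (x ∈ SsetB η ↔ y ∈ SsetB η)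

/-- Two conditions are compatible if some condition extends both. -/
def CompatibleB {A B : Set (ℕ → Bool)} (p q : CondB A B) : Prop :=
  ∃ r : CondB A B, p.graph ⊆ r.graph ∧ q.graph ⊆ r.graph

/-!
A condition `p` is coded by a level `n` at which the points of its domain are already distinguished,
together with, for each pair `(x, y)` in its graph, the restrictions of `x` and `y` to `n` and their
odd parts. Members of `C` have only countably many odd parts, so there are countably many codes.

Let `p` and `q` have the same code, `(x, y) ∈ p` and `(x', y') ∈ q`, and let `(x₀, y₀) ∈ q` have the
code of `(x, y)`. If `x₀ = x'`, then `y₀ = y'`, so `x, x'` have the same odd part, as do `y, y'`;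
what remains is to compare even parts, and by `S_η`-preservation that of `y` equals that of `x`, and
that of `y'` equals that of `x'`. If `x₀ ≠ x'`, then `x₀` and `x'` split below `n`, so `x` and `x'`
split where `x₀` and `x'` do, likewise `y` and `y'` where `y₀` and `y'` do, and `q` maps the pair
`x₀, x'` to `y₀, y'`, preserving the splitting level.
-/

namespace Erel

variable {i n : ℕ} {x y z : ℕ → Bool}

theorem symm (h : Erel i x y) : Erel i y x := fun k hk => (h k hk).symm

theorem comm : Erel i x y ↔ Erel i y x := ⟨symm, symm⟩

theorem trans (hxy : Erel i x y) (hyz : Erel i y z) : Erel i x z :=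
  fun k hk => (hxy k hk).trans (hyz k hk)

theorem mono (hin : i ≤ n) (h : Erel n x y) : Erel i x y := fun k hk => h k (hk.trans_le hin)

-- In an ultrametric space every triangle is isosceles, the two longest sides being equal.
theorem congr_left_of_not_erel (hxy : Erel n x y) (hyz : ¬ Erel n y z) :
    Erel i x z ↔ Erel i y z := by
  rcases le_total i n with hin | hni
  · exact ⟨(hxy.mono hin).symm.trans, (hxy.mono hin).trans⟩
  · exact iff_of_false (fun h => hyz (hxy.symm.trans (h.mono hni))) (fun h => hyz (h.mono hni))

end Erel

theorem forall_erel_iff_eq {x y : ℕ → Bool} : (∀ i, Erel i x y) ↔ x = y :=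
  ⟨fun h => funext fun k => h (k + 1) k k.lt_succ_self, fun h _ _ _ => congrFun h _⟩

theorem SsetB_subset_DsetB (η : ℕ → Bool) : SsetB η ⊆ DsetB η := by
  rintro x (hx | rfl)
  · exact hx.1
  · simp [DsetB, bfun]

/-- The odd part `n ↦ σ (2n + 1)` of a point of Cantor space. -/
def oddPart (x : ℕ → Bool) : ℕ → Bool := fun n => x (2 * n + 1)

theorem erel_iff_of_oddPart_eq {i : ℕ} {x y : ℕ → Bool} (h : oddPart x = oddPart y) :
    Erel i x y ↔ ∀ m, 2 * m < i → x (2 * m) = y (2 * m) := by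
  refine ⟨fun hxy m => hxy (2 * m), fun heven k hk => ?_⟩
  obtain ⟨m, rfl | rfl⟩ := k.even_or_odd'
  · exact heven m hk
  · exact congrFun h m

theorem erel_iff_erel_of_mem_DsetB {i : ℕ} {η η' x x' y y' : ℕ → Bool}
    (hx : x ∈ DsetB η) (hy : y ∈ DsetB η) (hx' : x' ∈ DsetB η') (hy' : y' ∈ DsetB η')
    (hxx' : oddPart x = oddPart x') (hyy' : oddPart y = oddPart y') :
    Erel i x x' ↔ Erel i y y' := by
  simp only [erel_iff_of_oddPart_eq hxx', erel_iff_of_oddPart_eq hyy', hx _, hy _, hx' _,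
    hy' _]

theorem countable_ofPred_finite_ne_false (α : Type*) [Countable α] :
    {f : α → Bool | {a | f a ≠ false}.Finite}.Countable := by
  refine Set.Countable.ofPred_finite.preimage_of_injOn (f := fun f : α → Bool => {a | f a ≠ false})
    fun f _ g _ hfg => funext fun a => ?_
  have hiff : f a ≠ false ↔ g a ≠ false := Set.ext_iff.1 hfg a
  simpa only [ne_eq, Bool.not_eq_false, ← Bool.eq_iff_iff] using hiff

theorem countable_oddPart_image_CsetB : (oddPart '' CsetB).Countable := by
  refine ((countable_ofPred_finite_ne_false ℕ).union
    (Set.countable_singleton fun _ => true)).mono ?_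
  rintro _ ⟨x, hx, rfl⟩
  obtain ⟨η, hfin | rfl⟩ := Set.mem_iUnion.1 hx
  · exact Or.inl hfin.2
  · exact Or.inr (funext fun m => by simp [oddPart, bfun, Nat.add_mod])

theorem exists_forall_erel_imp_eq {s : Set (ℕ → Bool)} (hs : s.Finite) :
    ∃ n, ∀ x ∈ s, ∀ y ∈ s, Erel n x y → x = y := by
  have heventually : ∀ᶠ n in Filter.atTop, ∀ x ∈ s, ∀ y ∈ s, Erel n x y → x = y := by
    refine hs.eventually_all.2 fun x _ => hs.eventually_all.2 fun y _ => ?_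
    by_cases hxy : x = y
    · exact .of_forall fun _ _ => hxy
    · obtain ⟨k, hk⟩ := Function.ne_iff.1 hxy
      filter_upwards [Filter.eventually_gt_atTop k] with n hn h
      exact absurd (h k hn) hk
  exact heventually.exists

/-- The code of a point `x` at level `n`: its restriction to `n` and its odd part. The restriction
is a list, rather than a function on `Fin n`, so that codes at all levels have the same type. -/
def pointCode (n : ℕ) (x : ℕ → Bool) : List Bool × (ℕ → Bool) := ((List.range n).map x, oddPart x)

theorem pointCode_eq_iff {n : ℕ} {x y : ℕ → Bool} :
    pointCode n x = pointCode n y ↔ Erel n x y ∧ oddPart x = oddPart y := by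
  simp [pointCode, Erel]

theorem countable_iUnion_pointCode_image_CsetB : (⋃ n, pointCode n '' CsetB).Countable := by
  refine (Set.countable_univ.prod countable_oddPart_image_CsetB).mono ?_
  refine Set.iUnion_subset fun n => Set.image_subset_iff.2 fun x hx => ?_
  exact ⟨Set.mem_univ _, Set.mem_image_of_mem oddPart hx⟩

/-- Codes of conditions: a level, and a set of pairs of codes of points at that level. -/
abbrev CondCode : Type := ℕ × Set ((List Bool × (ℕ → Bool)) × (List Bool × (ℕ → Bool)))

namespace CondB

variable {A B : Set (ℕ → Bool)}

theorem exists_mem_SsetB (hAC : A ⊆ CsetB) (p : CondB A B) {x y : ℕ → Bool}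
    (hxy : (x, y) ∈ p.graph) : ∃ η, x ∈ SsetB η ∧ y ∈ SsetB η := by
  obtain ⟨η, hx⟩ := Set.mem_iUnion.1 (hAC (p.dom_sub hxy))
  exact ⟨η, hx, (p.spres η hxy).1 hx⟩

theorem graph_subset_CsetB_prod (hAC : A ⊆ CsetB) (p : CondB A B) :
    p.graph ⊆ CsetB ×ˢ CsetB := by
  rintro ⟨x, y⟩ hxy
  obtain ⟨η, hx, hy⟩ := p.exists_mem_SsetB hAC hxy
  exact ⟨Set.mem_iUnion_of_mem η hx, Set.mem_iUnion_of_mem η hy⟩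

-- That the union is single-valued and injective follows from preservation of all the `E_i`.
theorem exists_graph_eq_union (p q : CondB A B)
    (hpq : ∀ ⦃x y x' y'⦄ (i : ℕ), (x, y) ∈ p.graph → (x', y') ∈ q.graph →
      (Erel i x x' ↔ Erel i y y')) :
    ∃ r : CondB A B, r.graph = p.graph ∪ q.graph := by
  have hE : ∀ ⦃x y x' y'⦄ (i : ℕ), (x, y) ∈ p.graph ∪ q.graph → (x', y') ∈ p.graph ∪ q.graph →
      (Erel i x x' ↔ Erel i y y') := by
    rintro x y x' y' i (h | h) (h' | h')
    · exact p.epres i h h'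
    · exact hpq i h h'
    · rw [Erel.comm, hpq i h' h, Erel.comm]
    · exact q.epres i h h'
  exact ⟨{
    graph := p.graph ∪ q.graph
    finite := p.finite.union q.finite
    dom_sub := fun _ _ h => h.elim (fun h => p.dom_sub h) fun h => q.dom_sub h
    ran_sub := fun _ _ h => h.elim (fun h => p.ran_sub h) fun h => q.ran_sub h
    functional := fun _ _ _ h h' =>
      forall_erel_iff_eq.1 fun i => (hE i h h').1 (forall_erel_iff_eq.2 rfl i)
    injective := fun _ _ _ h h' =>
      forall_erel_iff_eq.1 fun i => (hE i h h').2 (forall_erel_iff_eq.2 rfl i)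
    epres := hE
    spres := fun _ _ η h => h.elim (fun h => p.spres η h) fun h => q.spres η h }, rfl⟩

/-- `p.HasCode c` says that `c` is a code of the condition `p`: its level distinguishes the
points of the domain of `p`, and its set consists of the codes of the pairs in the graph of `p`.
Every large enough level occurs, so a condition has many codes. -/
def HasCode (p : CondB A B) (c : CondCode) : Prop :=
  (∀ x ∈ Prod.fst '' p.graph, ∀ y ∈ Prod.fst '' p.graph, Erel c.1 x y → x = y) ∧
    Prod.map (pointCode c.1) (pointCode c.1) '' p.graph = c.2

theorem exists_hasCode (p : CondB A B) : ∃ c, p.HasCode c := by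
  obtain ⟨n, hn⟩ := exists_forall_erel_imp_eq (p.finite.image Prod.fst)
  exact ⟨(n, Prod.map (pointCode n) (pointCode n) '' p.graph), hn, rfl⟩

theorem countable_ofPred_hasCode (hAC : A ⊆ CsetB) :
    {c | ∃ p : CondB A B, p.HasCode c}.Countable := by
  have hpoints := countable_iUnion_pointCode_image_CsetB
  refine ((Set.countable_univ (α := ℕ)).prod
    (Set.countable_ofPred_finite_subset (hpoints.prod hpoints))).mono ?_
  rintro ⟨n, t⟩ ⟨p, -, ht⟩
  obtain rfl : Prod.map (pointCode n) (pointCode n) '' p.graph = t := ht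
  refine ⟨Set.mem_univ n, p.finite.image _, ?_⟩
  rintro _ ⟨u, hu, rfl⟩
  obtain ⟨hx, hy⟩ := p.graph_subset_CsetB_prod hAC hu
  exact ⟨Set.mem_iUnion_of_mem n (Set.mem_image_of_mem _ hx),
    Set.mem_iUnion_of_mem n (Set.mem_image_of_mem _ hy)⟩

theorem HasCode.erel_iff_erel (hAC : A ⊆ CsetB) {p q : CondB A B} {c : CondCode}
    (hp : p.HasCode c) (hq : q.HasCode c) ⦃x y x' y' : ℕ → Bool⦄ (i : ℕ)
    (hxy : (x, y) ∈ p.graph) (hxy' : (x', y') ∈ q.graph) : Erel i x x' ↔ Erel i y y' := by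
  obtain ⟨⟨x₀, y₀⟩, hxy₀, hcode⟩ : Prod.map (pointCode c.1) (pointCode c.1) (x, y) ∈
      Prod.map (pointCode c.1) (pointCode c.1) '' q.graph :=
    hq.2 ▸ hp.2 ▸ Set.mem_image_of_mem _ hxy
  obtain ⟨⟨hx, hoddx⟩, hy, hoddy⟩ := (Prod.mk.inj hcode).imp pointCode_eq_iff.1 pointCode_eq_iff.1
  by_cases hclose : Erel c.1 x₀ x'
  · obtain rfl : x₀ = x' :=
      hq.1 _ (Set.mem_image_of_mem _ hxy₀) _ (Set.mem_image_of_mem _ hxy') hclose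
    obtain rfl : y₀ = y' := q.functional hxy₀ hxy'
    obtain ⟨η, hxη, hyη⟩ := p.exists_mem_SsetB hAC hxy
    obtain ⟨η', hxη', hyη'⟩ := q.exists_mem_SsetB hAC hxy'
    exact erel_iff_erel_of_mem_DsetB (SsetB_subset_DsetB η hxη) (SsetB_subset_DsetB η hyη)
      (SsetB_subset_DsetB η' hxη') (SsetB_subset_DsetB η' hyη') hoddx.symm hoddy.symm
  · calc Erel i x x' ↔ Erel i x₀ x' := hx.symm.congr_left_of_not_erel hclose
      _ ↔ Erel i y₀ y' := q.epres i hxy₀ hxy'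
      _ ↔ Erel i y y' :=
        (hy.symm.congr_left_of_not_erel ((q.epres c.1 hxy₀ hxy').not.1 hclose)).symm

end CondB

theorem condB_sigma_linked_general (A B : Set (ℕ → Bool)) (hAC : A ⊆ CsetB) :
    ∃ F : ℕ → Set (CondB A B),
      (∀ p : CondB A B, ∃ n, p ∈ F n) ∧
      ∀ n : ℕ, ∀ p ∈ F n, ∀ q ∈ F n,
        (∃ r : CondB A B, r.graph = p.graph ∪ q.graph) ∧ CompatibleB p q := by
  obtain ⟨f, hf⟩ := Set.countable_iff_exists_subset_range.1
    (CondB.countable_ofPred_hasCode (B := B) hAC)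
  refine ⟨fun n => {p | p.HasCode (f n)}, fun p => ?_, fun n p hp q hq => ?_⟩
  · obtain ⟨c, hc⟩ := p.exists_hasCode
    obtain ⟨n, rfl⟩ := hf ⟨p, hc⟩
    exact ⟨n, hc⟩
  · obtain ⟨r, hr⟩ := p.exists_graph_eq_union q (hp.erel_iff_erel hAC hq)
    exact ⟨⟨r, hr⟩, r, hr ▸ Set.subset_union_left, hr ▸ Set.subset_union_right⟩

/-- For `A, B ⊆ C`, the forcing `𝒫(A,B)` is σ-linked: it is a countable union of
sets `F n` such that the union of the graphs of any two conditions in the same `F n`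
is again the graph of a condition; in particular they are compatible. -/
theorem condB_sigma_linked (A B : Set (ℕ → Bool)) (hAC : A ⊆ CsetB) (hBC : B ⊆ CsetB) :
    ∃ F : ℕ → Set (CondB A B),
      (∀ p : CondB A B, ∃ n, p ∈ F n) ∧
      ∀ n : ℕ, ∀ p ∈ F n, ∀ q ∈ F n,
        (∃ r : CondB A B, r.graph = p.graph ∪ q.graph) ∧ CompatibleB p q :=
  condB_sigma_linked_general A B hAC
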